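/- Let α ∈ (0,1), let 0 < t₂ < t₁ be reals, and let N be a positive integer. For P > 0 define the sum-rate loss g(P) = N·log₂( ((t₂ + P)·(t₁ + (1−α)·P)) / ((t₂ + (1−α)·P)·(t₁ + P)) ). Then g attains its maximum over P > 0 at P* = √(t₁·t₂/(1−α)); that is, g(P) ≤ g(P*) for all P > 0, and the maximum value equals g(P*) = N·log₂(1 + α·(t₁ − t₂)/(t₂ + (1−α)·t₁ + 2·√((1−α)·t₁·t₂))). -/

import Mathlib

/-!
Writing `b = 1 - α`, the argument of the logarithm is `1 + α (t₁ - t₂) P / ((t₂ + b P) (t₁ + P))`.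
If `b p² = t₂ t₁`, completing the square gives
`(t₂ + b P) (t₁ + P) = (t₂ + b t₁ + 2 b p) P + b (P - p)²`, so the fraction is largest at `P = p`,
where the square vanishes and the factor `P` cancels.
-/

theorem add_mul_mul_add_eq_mul_add_mul_sub_sq {R : Type*} [CommRing R] {a b c p : R}
    (hp : b * p ^ 2 = a * c) (x : R) :
    (a + b * x) * (c + x) = (a + b * c + 2 * b * p) * x + b * (x - p) ^ 2 := by
  linear_combination -hp

theorem div_add_mul_mul_add_eq_inv {K : Type*} [Field K] {a b c p : K}
    (hp : b * p ^ 2 = a * c) (hp₀ : p ≠ 0) :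
    p / ((a + b * p) * (c + p)) = (a + b * c + 2 * b * p)⁻¹ := by
  have hdenom : (a + b * p) * (c + p) = (a + b * c + 2 * b * p) * p := by
    simpa using add_mul_mul_add_eq_mul_add_mul_sub_sq hp p
  rw [hdenom, div_mul_cancel_right₀ hp₀]

theorem div_add_mul_mul_add_le_inv {K : Type*} [Field K] [LinearOrder K] [IsStrictOrderedRing K]
    {a b c p x : K} (ha : 0 < a) (hb : 0 ≤ b) (hc : 0 < c) (hp : b * p ^ 2 = a * c)
    (hp₀ : 0 ≤ p) (hx : 0 ≤ x) :
    x / ((a + b * x) * (c + x)) ≤ (a + b * c + 2 * b * p)⁻¹ := by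
  have hdenom : (a + b * c + 2 * b * p) * x ≤ (a + b * x) * (c + x) := by
    rw [add_mul_mul_add_eq_mul_add_mul_sub_sq hp x]
    exact le_add_of_nonneg_right (by positivity)
  rwa [div_le_iff₀ (by positivity), le_inv_mul_iff₀ (by positivity)]

theorem mul_sqrt_div {b : ℝ} (hb : 0 ≤ b) (x : ℝ) : b * √(x / b) = √(b * x) := by
  rw [Real.sqrt_div' x hb, Real.sqrt_mul hb, mul_div_left_comm, Real.div_sqrt, mul_comm]

/-- The ratio, at total power `P`, of the values of `1 + SINR` for the traces `t₂` and `t₁`, where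
`1 + SINR` for the trace `t` is `1 + α (P / t) / (1 + (1 - α) (P / t)) = (t + P) / (t + (1 - α) P)`.
The sum-rate loss of `N` users is `N` times its binary logarithm. -/
def sinrRatio {K : Type*} [Field K] (α t₁ t₂ P : K) : K :=
  ((t₂ + P) * (t₁ + (1 - α) * P)) / ((t₂ + (1 - α) * P) * (t₁ + P))

section Field

variable {K : Type*} [Field K] {α t₁ t₂ P p : K}

theorem sinrRatio_eq_one_add (h₂ : t₂ + (1 - α) * P ≠ 0) (h₁ : t₁ + P ≠ 0) :
    sinrRatio α t₁ t₂ P =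
      1 + α * (t₁ - t₂) * (P / ((t₂ + (1 - α) * P) * (t₁ + P))) := by
  rw [sinrRatio, ← mul_div_assoc, one_add_div (mul_ne_zero h₂ h₁)]
  congr 1
  ring

variable [LinearOrder K] [IsStrictOrderedRing K]

theorem sinrRatio_pos (hα : α ≤ 1) (ht₁ : 0 < t₁) (ht₂ : 0 < t₂) (hP : 0 ≤ P) :
    0 < sinrRatio α t₁ t₂ P := by
  have : 0 ≤ 1 - α := sub_nonneg.2 hα
  rw [sinrRatio]
  positivity

theorem sinrRatio_eq_of_mul_sq_eq (hα : α ≤ 1) (ht₁ : 0 < t₁) (ht₂ : 0 < t₂)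
    (hp : (1 - α) * p ^ 2 = t₂ * t₁) (hp₀ : 0 < p) :
    sinrRatio α t₁ t₂ p =
      1 + α * (t₁ - t₂) / (t₂ + (1 - α) * t₁ + 2 * (1 - α) * p) := by
  have : 0 ≤ 1 - α := sub_nonneg.2 hα
  rw [sinrRatio_eq_one_add (by positivity) (by positivity),
    div_add_mul_mul_add_eq_inv hp hp₀.ne', ← div_eq_mul_inv]

theorem sinrRatio_le_of_mul_sq_eq (hα : α ≤ 1) (ht₁ : 0 < t₁) (ht₂ : 0 < t₂)
    (hsign : 0 ≤ α * (t₁ - t₂)) (hp : (1 - α) * p ^ 2 = t₂ * t₁) (hp₀ : 0 < p) (hP : 0 ≤ P) :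
    sinrRatio α t₁ t₂ P ≤ sinrRatio α t₁ t₂ p := by
  have hb : 0 ≤ 1 - α := sub_nonneg.2 hα
  rw [sinrRatio_eq_of_mul_sq_eq hα ht₁ ht₂ hp hp₀,
    sinrRatio_eq_one_add (by positivity) (by positivity),
    div_eq_mul_inv _ (t₂ + (1 - α) * t₁ + 2 * (1 - α) * p)]
  gcongr
  exact div_add_mul_mul_add_le_inv ht₂ hb ht₁ hp hp₀.le hP

end Field

theorem stmt5_general {α t₁ t₂ : ℝ} (hα : α < 1) (ht₁ : 0 < t₁) (ht₂ : 0 < t₂)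
    (hsign : 0 ≤ α * (t₁ - t₂)) (N : ℕ) :
    IsMaxOn (fun P => (N : ℝ) * Real.logb 2 (sinrRatio α t₁ t₂ P)) (Set.Ici 0)
        √(t₁ * t₂ / (1 - α)) ∧
      (N : ℝ) * Real.logb 2 (sinrRatio α t₁ t₂ √(t₁ * t₂ / (1 - α))) =
        N * Real.logb 2
          (1 + α * (t₁ - t₂) / (t₂ + (1 - α) * t₁ + 2 * √((1 - α) * t₁ * t₂))) := by
  have hb : 0 < 1 - α := sub_pos.2 hα
  have hpos : 0 < √(t₁ * t₂ / (1 - α)) := by positivity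
  have hcrit : (1 - α) * √(t₁ * t₂ / (1 - α)) ^ 2 = t₂ * t₁ := by
    rw [Real.sq_sqrt (by positivity), mul_div_cancel₀ _ hb.ne', mul_comm]
  refine ⟨fun P hP => ?_, ?_⟩
  · have hratio := sinrRatio_le_of_mul_sq_eq hα.le ht₁ ht₂ hsign hcrit hpos hP
    have hratio_pos := sinrRatio_pos hα.le ht₁ ht₂ hP
    exact mul_le_mul_of_nonneg_left
      (Real.logb_le_logb_of_le one_lt_two hratio_pos hratio) N.cast_nonneg
  · rw [sinrRatio_eq_of_mul_sq_eq hα.le ht₁ ht₂ hcrit hpos, mul_assoc 2, mul_sqrt_div hb.le,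
      mul_assoc (1 - α)]

/-- For `α ∈ (0,1)`, `0 < t₂ < t₁`, `N` a positive integer, and the sum-rate
loss `g P = N log₂(((t₂+P)(t₁+(1-α)P)) / ((t₂+(1-α)P)(t₁+P)))`, the function `g` attains its
maximum over `P > 0` at `P* = √(t₁ t₂ / (1-α))`, with maximum value
`N log₂(1 + α(t₁-t₂)/(t₂+(1-α)t₁+2√((1-α)t₁t₂)))`. -/
theorem stmt5 (α t₁ t₂ : ℝ) (hα : α ∈ Set.Ioo (0 : ℝ) 1) (ht₂ : 0 < t₂) (ht : t₂ < t₁)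
    (N : ℕ) (hN : 0 < N)
    (g : ℝ → ℝ)
    (hg : ∀ P, g P = (N : ℝ) * Real.logb 2
      (((t₂ + P) * (t₁ + (1 - α) * P)) / ((t₂ + (1 - α) * P) * (t₁ + P))))
    (Pstar : ℝ) (hPstar : Pstar = Real.sqrt (t₁ * t₂ / (1 - α))) :
    (∀ P : ℝ, 0 < P → g P ≤ g Pstar) ∧
      g Pstar = (N : ℝ) * Real.logb 2
        (1 + α * (t₁ - t₂) / (t₂ + (1 - α) * t₁ + 2 * Real.sqrt ((1 - α) * t₁ * t₂))) := by
  obtain rfl : g = fun P => (N : ℝ) * Real.logb 2 (sinrRatio α t₁ t₂ P) := funext hg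
  obtain ⟨hmax, hval⟩ :=
    stmt5_general hα.2 (ht₂.trans ht) ht₂ (mul_nonneg hα.1.le (sub_nonneg.2 ht.le)) N
  exact hPstar ▸ ⟨fun P hP => hmax hP.le, hval⟩
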